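/- arXiv:1408.3502 — 7 statements merged into one kernel-verified Lean document; each statement's English description precedes it below -/
import Mathlib

section
/- Let D be a distance on X, let Q₁, …, Q_n ⊆ X (n ≥ 1), and for each i ∈ {1,…,n} let r_i : X → X be a map such that for every ω ∈ X: (i) r_i(ω) ∈ Q_i; (ii) Q_i satisfies the triangle equality for ω at r_i(ω), i.e. D φ (r_i(ω)) + D (r_i(ω)) ω = D φ ω for all φ ∈ Q_i; and (iii) for every j ∈ {1,…,n}, if ω ∈ Q_j then r_i(ω) ∈ Q_j (subprojection property). Given ψ ∈ X, define ρ₀ := ψ and ρ_k := r_k(ρ_{k−1}) for k = 1,…,n. Then Q₁ ∩ … ∩ Q_n satisfies the triangle equality for ψ at ρ_n, i.e. D φ ρ_n + D ρ_n ψ = D φ ψ for all φ ∈ Q₁ ∩ … ∩ Q_n; consequently, if D ρ_n ψ < ∞, then ρ_n is the unique minimiser of D(·,ψ) on Q₁ ∩ … ∩ Q_n. -/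
open ENNReal

/-- Iterated entropic projections.  Let `Q 1, …, Q n` be subsets of `X` (`n ≥ 1`),
and for each `i ∈ {1,…,n}` let `r i : X → X` be a map such that for every `ω`: `r i ω ∈ Q i`;
`Q i` satisfies the triangle equality for `ω` at `r i ω`; and `r i` preserves membership in each
`Q j` (`j ∈ {1,…,n}`, subprojection property).  Define `ρ 0 = ψ` and `ρ k = r k (ρ (k-1))`.
Then `Q 1 ∩ … ∩ Q n` satisfies the triangle equality for `ψ` at `ρ n`; consequently, if
`D (ρ n) ψ < ∞`, then `ρ n` is the unique minimiser of `D (·, ψ)` on `Q 1 ∩ … ∩ Q n`. -/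
theorem iterated_entropic_projection {X : Type*} (D : X → X → ℝ≥0∞)
    (hD : ∀ x y, D x y = 0 ↔ x = y)
    (n : ℕ) (hn : 1 ≤ n)
    (Q : ℕ → Set X) (r : ℕ → X → X)
    (hmem : ∀ i, 1 ≤ i → i ≤ n → ∀ ω, r i ω ∈ Q i)
    (htri : ∀ i, 1 ≤ i → i ≤ n → ∀ ω, ∀ φ ∈ Q i, D φ (r i ω) + D (r i ω) ω = D φ ω)
    (hsub : ∀ i, 1 ≤ i → i ≤ n → ∀ j, 1 ≤ j → j ≤ n → ∀ ω ∈ Q j, r i ω ∈ Q j)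
    (ψ : X) (ρ : ℕ → X)
    (hρ0 : ρ 0 = ψ)
    (hρ : ∀ k, 1 ≤ k → k ≤ n → ρ k = r k (ρ (k - 1))) :
    (∀ i, 1 ≤ i → i ≤ n → ρ n ∈ Q i) ∧
    (∀ φ, (∀ i, 1 ≤ i → i ≤ n → φ ∈ Q i) → D φ (ρ n) + D (ρ n) ψ = D φ ψ) ∧
    (D (ρ n) ψ < ⊤ →
      ∀ φ, (∀ i, 1 ≤ i → i ≤ n → φ ∈ Q i) →
        D (ρ n) ψ ≤ D φ ψ ∧ (D φ ψ = D (ρ n) ψ → φ = ρ n)) := by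
  have key : ∀ k, k ≤ n → (∀ i, 1 ≤ i → i ≤ k → ρ k ∈ Q i) ∧
      (∀ φ, (∀ i, 1 ≤ i → i ≤ k → φ ∈ Q i) → D φ (ρ k) + D (ρ k) ψ = D φ ψ) := by
    intro k
    induction k with
    | zero =>
      intro _
      refine ⟨fun i h1 h2 => by omega, fun φ _ => ?_⟩
      rw [hρ0, (hD ψ ψ).2 rfl, add_zero]
    | succ k ih =>
      intro hk
      obtain ⟨ihm, iht⟩ := ih (by omega)
      have e : ρ (k + 1) = r (k + 1) (ρ k) := hρ (k + 1) (by omega) hk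
      have m : ∀ i, 1 ≤ i → i ≤ k → ρ (k + 1) ∈ Q i := fun i h1 h2 => by
        rw [e]
        exact hsub (k + 1) (by omega) hk i h1 (by omega) _ (ihm i h1 h2)
      refine ⟨fun i h1 h2 => ?_, fun φ hφ => ?_⟩
      · rcases Nat.lt_or_ge k i with h | h
        · obtain rfl : i = k + 1 := by omega
          rw [e]
          exact hmem _ h1 hk _
        · exact m i h1 h
      · have t := htri (k + 1) (by omega) hk (ρ k) φ (hφ _ (by omega) le_rfl)
        rw [← e] at t
        rw [← iht _ m, ← add_assoc, t]
        exact iht φ fun i h1 h2 => hφ i h1 (by omega)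
  obtain ⟨hm, ht⟩ := key n le_rfl
  refine ⟨hm, ht, fun hfin φ hφ => ?_⟩
  have t := ht φ hφ
  refine ⟨by rw [← t]; exact le_add_self, fun h => ?_⟩
  rw [← hD]
  rw [h] at t
  exact (ENNReal.add_left_inj hfin.ne).1 (t.trans (zero_add _).symm)
end

section
/- Let P ∈ M_d(ℂ) be a projection, let ψ be a positive definite density matrix, set ρ := P·ψ·P + (1−P)·ψ·(1−P) (which is again a positive definite density matrix), and let φ be any positive definite density matrix commuting with P (φ·P = P·φ). Then the Pythagorean (triangle) equality D₀(φ,ψ) = D₀(φ,ρ) + D₀(ρ,ψ) holds. -/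
open Matrix
open scoped ComplexOrder

/-- Matrix logarithm: the real logarithm applied via the continuous functional calculus. -/
noncomputable def matLog {d : ℕ} (A : Matrix (Fin d) (Fin d) ℂ) : Matrix (Fin d) (Fin d) ℂ :=
  cfc Real.log A

/-- The Umegaki distance `D₀(φ,ψ) := Re (tr (ψ · (log ψ − log φ)))`. -/
noncomputable def umegakiD0 {d : ℕ} (φ ψ : Matrix (Fin d) (Fin d) ℂ) : ℝ :=
  (Matrix.trace (ψ * (matLog ψ - matLog φ))).re

theorem aux_trace {d : ℕ} (P ψ X : Matrix (Fin d) (Fin d) ℂ) (hP2 : P * P = P)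
    (h : X * P = P * X) :
    Matrix.trace ((P * ψ * P + (1 - P) * ψ * (1 - P)) * X) = Matrix.trace (ψ * X) := by
  have h1 : Matrix.trace (P * ψ * P * X) = Matrix.trace (ψ * (P * X)) := by
    rw [Matrix.mul_assoc P ψ P, Matrix.mul_assoc P, Matrix.trace_mul_comm P, Matrix.mul_assoc,
      Matrix.mul_assoc, h, ← Matrix.mul_assoc P P, hP2]
  have h2 : Matrix.trace ((1 - P) * ψ * (1 - P) * X) = Matrix.trace (ψ * ((1 - P) * X)) := by
    have e : X * (1 - P) = (1 - P) * X := by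
      rw [Matrix.mul_sub, Matrix.sub_mul, h, Matrix.mul_one, Matrix.one_mul]
    have e2 : (1 - P) * (1 - P) = 1 - P := by
      rw [Matrix.mul_sub, Matrix.sub_mul _ _ P, hP2, Matrix.mul_one, Matrix.one_mul, sub_self,
        sub_zero]
    rw [Matrix.mul_assoc (1 - P) ψ, Matrix.mul_assoc (1 - P), Matrix.trace_mul_comm (1 - P),
      Matrix.mul_assoc, Matrix.mul_assoc, e, ← Matrix.mul_assoc (1 - P) (1 - P),
      e2]
  rw [Matrix.add_mul, Matrix.trace_add, h1, h2, ← Matrix.trace_add, ← Matrix.mul_add,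
    ← Matrix.add_mul, add_sub_cancel, Matrix.one_mul]

theorem aux_comm {d : ℕ} (P A : Matrix (Fin d) (Fin d) ℂ) (h : A * P = P * A) :
    matLog A * P = P * matLog A :=
  Commute.cfc_real (show Commute A P from h) Real.log

/-- Pythagorean (triangle) equality for the weak Lüders projection associated to a
single projection `P`: with `ρ := P ψ P + (1−P) ψ (1−P)`, for every positive definite density
matrix `φ` commuting with `P` one has `D₀(φ,ψ) = D₀(φ,ρ) + D₀(ρ,ψ)`. -/
theorem pythagorean_equality_single_projection {d : ℕ} (hd : 1 ≤ d)
    (P ψ φ : Matrix (Fin d) (Fin d) ℂ)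
    (hP : Pᴴ = P) (hP2 : P * P = P)
    (hψ : ψ.PosDef) (hψ1 : ψ.trace = 1)
    (hφ : φ.PosDef) (hφ1 : φ.trace = 1)
    (hφP : φ * P = P * φ) :
    umegakiD0 φ ψ =
      umegakiD0 φ (P * ψ * P + (1 - P) * ψ * (1 - P)) +
        umegakiD0 (P * ψ * P + (1 - P) * ψ * (1 - P)) ψ := by
  have hρ : (P * ψ * P + (1 - P) * ψ * (1 - P)) * P
      = P * (P * ψ * P + (1 - P) * ψ * (1 - P)) := by
    have e : (1 - P) * P = 0 := by rw [Matrix.sub_mul, hP2, Matrix.one_mul, sub_self]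
    have e2 : P * (1 - P) = 0 := by rw [Matrix.mul_sub, hP2, Matrix.mul_one, sub_self]
    rw [Matrix.add_mul, Matrix.mul_add, Matrix.mul_assoc _ (1 - P) P, e,
      Matrix.mul_assoc (1 - P) ψ (1 - P), ← Matrix.mul_assoc P (1 - P), e2,
      Matrix.mul_assoc _ P P, hP2, Matrix.mul_assoc P ψ P, ← Matrix.mul_assoc P P, hP2]
    simp
  have t1 := aux_trace P ψ _ hP2 (aux_comm P _ hρ)
  have t2 := aux_trace P ψ _ hP2 (aux_comm P _ hφP)
  generalize P * ψ * P + (1 - P) * ψ * (1 - P) = ρ at t1 t2 ⊢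
  unfold umegakiD0
  rw [Matrix.mul_sub, Matrix.mul_sub, Matrix.mul_sub, Matrix.trace_sub, Matrix.trace_sub,
    Matrix.trace_sub, t1, t2]
  simp only [Complex.sub_re]
  ring
end

section
/- (Weak Lüders rule as entropic projection.) Let {P_1,…,P_n} ⊆ M_d(ℂ) be projections with P_i·P_j = δ_ij·P_i for all i,j and P_1 + … + P_n = 1, let ψ be a positive definite density matrix, and let Q_L := { φ : φ is a positive definite density matrix and φ·P_i = P_i·φ for all i }. Set ρ := Σ_{i=1}^n P_i·ψ·P_i. Then ρ ∈ Q_L, and ρ is the unique minimiser of D₀(·,ψ) on Q_L: for every φ ∈ Q_L, D₀(ρ,ψ) ≤ D₀(φ,ψ), with equality if and only if φ = ρ. -/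
open Matrix
open scoped ComplexOrder

theorem wl_spec {d : ℕ} {A : Matrix (Fin d) (Fin d) ℂ} (hA : A.PosDef) :
    ∃ (U : Matrix (Fin d) (Fin d) ℂ) (a : Fin d → ℝ), Uᴴ * U = 1 ∧ U * Uᴴ = 1 ∧ (∀ i, 0 < a i) ∧
      A = U * diagonal (fun i => (a i : ℂ)) * Uᴴ ∧
      matLog A = U * diagonal (fun i => (Real.log (a i) : ℂ)) * Uᴴ := by
  refine ⟨hA.1.eigenvectorUnitary, hA.1.eigenvalues, ?_, ?_, hA.eigenvalues_pos, ?_, ?_⟩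
  · exact Unitary.coe_star_mul_self _
  · exact Unitary.coe_mul_star_self _
  · have := hA.1.spectral_theorem
    rw [Unitary.conjStarAlgAut_apply] at this
    exact this
  · unfold matLog
    rw [hA.1.cfc_eq, Matrix.IsHermitian.cfc, Unitary.conjStarAlgAut_apply]
    rfl

theorem wl_trace {d : ℕ} (U V : Matrix (Fin d) (Fin d) ℂ) (f g : Fin d → ℝ) :
    ((U * diagonal (fun i => (f i : ℂ)) * Uᴴ) *
      (V * diagonal (fun i => (g i : ℂ)) * Vᴴ)).trace.re =
      ∑ i, ∑ j, f i * g j * Complex.normSq ((Uᴴ * V) i j) := by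
  have h : ((U * diagonal (fun i => (f i : ℂ)) * Uᴴ) *
      (V * diagonal (fun i => (g i : ℂ)) * Vᴴ)).trace =
      ((diagonal (fun i => (f i : ℂ)) * (Uᴴ * V)) *
        (diagonal (fun i => (g i : ℂ)) * (Uᴴ * V)ᴴ)).trace := by
    rw [conjTranspose_mul, conjTranspose_conjTranspose]
    simp only [Matrix.mul_assoc]
    rw [Matrix.trace_mul_comm U]
    simp only [Matrix.mul_assoc]
  rw [h]
  generalize Uᴴ * V = W
  simp only [Matrix.trace, Matrix.diag, Matrix.mul_apply (M := diagonal _ * W), diagonal_mul,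
    conjTranspose_apply, Complex.re_sum]
  refine Finset.sum_congr rfl fun i _ => Finset.sum_congr rfl fun j _ => ?_
  have : (f i : ℂ) * W i j * ((g j : ℂ) * star (W i j)) =
      ((f i * g j * Complex.normSq (W i j) : ℝ) : ℂ) := by
    push_cast
    rw [Complex.normSq_eq_conj_mul_self]
    simp only [RCLike.star_def]
    ring
  rw [this, Complex.ofReal_re]

theorem wl_scalar {a b : ℝ} (ha : 0 < a) (hb : 0 < b) :
    0 ≤ a * Real.log a - a * Real.log b - a + b ∧
      (a * Real.log a - a * Real.log b - a + b = 0 → a = b) := by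
  have key : a * Real.log a - a * Real.log b - a + b = a * (b / a - 1 - Real.log (b / a)) := by
    rw [Real.log_div hb.ne' ha.ne']
    field_simp
    ring
  have hp : 0 < b / a := div_pos hb ha
  rw [key]
  refine ⟨mul_nonneg ha.le (by linarith [Real.log_le_sub_one_of_pos hp]), fun h => ?_⟩
  by_contra hne
  have h1 : b / a ≠ 1 := fun h1 => hne ((div_eq_one_iff_eq ha.ne').1 h1).symm
  have := Real.log_lt_sub_one_of_pos hp h1
  have : 0 < a * (b / a - 1 - Real.log (b / a)) := mul_pos ha (by linarith)
  linarith

theorem wl_klein {d : ℕ} {A B : Matrix (Fin d) (Fin d) ℂ} (hA : A.PosDef) (hB : B.PosDef)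
    (htr : A.trace = B.trace) :
    (A * matLog B).trace.re ≤ (A * matLog A).trace.re ∧
      ((A * matLog B).trace.re = (A * matLog A).trace.re → B = A) := by
  obtain ⟨U, a, hU1, hU2, ha, hAe, hAl⟩ := wl_spec hA
  obtain ⟨V, b, hV1, hV2, hb, hBe, hBl⟩ := wl_spec hB
  have oneV : V * diagonal (fun _ => ((1 : ℝ) : ℂ)) * Vᴴ = 1 := by simp [hV2]
  have oneU : U * diagonal (fun _ => ((1 : ℝ) : ℂ)) * Uᴴ = 1 := by simp [hU2]
  have e1 : (A * matLog B).trace.re =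
      ∑ i, ∑ j, a i * Real.log (b j) * Complex.normSq ((Uᴴ * V) i j) := by
    rw [hBl]; nth_rw 1 [hAe]; exact wl_trace U V a (fun j => Real.log (b j))
  have e2 : (A * matLog A).trace.re =
      ∑ i, ∑ j, (a i * Real.log (a i)) * 1 * Complex.normSq ((Uᴴ * V) i j) := by
    rw [← wl_trace U V (fun i => a i * Real.log (a i)) (fun _ => 1), oneV, Matrix.mul_one, hAl]
    nth_rw 1 [hAe]
    have : (U * diagonal (fun i => (a i : ℂ)) * Uᴴ) *
        (U * diagonal (fun i => (Real.log (a i) : ℂ)) * Uᴴ) =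
        U * (diagonal (fun i => (a i : ℂ)) * ((Uᴴ * U) *
          diagonal (fun i => (Real.log (a i) : ℂ)))) * Uᴴ := by
      simp only [Matrix.mul_assoc]
    rw [this, hU1, Matrix.one_mul, diagonal_mul_diagonal]
    simp only [Complex.ofReal_mul]
  have e3 : A.trace.re = ∑ i, ∑ j, a i * 1 * Complex.normSq ((Uᴴ * V) i j) := by
    rw [← wl_trace U V a (fun _ => 1), oneV, Matrix.mul_one, ← hAe]
  have e4 : B.trace.re = ∑ i, ∑ j, 1 * b j * Complex.normSq ((Uᴴ * V) i j) := by
    rw [← wl_trace U V (fun _ => 1) b, oneU, Matrix.one_mul, ← hBe]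
  have e5 : (A * matLog A).trace.re - (A * matLog B).trace.re =
      ∑ i, ∑ j, (a i * Real.log (a i) - a i * Real.log (b j) - a i + b j) *
        Complex.normSq ((Uᴴ * V) i j) := by
    have h0 : (A * matLog A).trace.re - (A * matLog B).trace.re =
      (A * matLog A).trace.re - (A * matLog B).trace.re - A.trace.re + B.trace.re := by
      rw [htr]; ring
    rw [h0, e1, e2, e3, e4]
    simp only [← Finset.sum_sub_distrib, ← Finset.sum_add_distrib]
    refine Finset.sum_congr rfl fun i _ => Finset.sum_congr rfl fun j _ => ?_
    ring
  have hnn : ∀ i j, 0 ≤ (a i * Real.log (a i) - a i * Real.log (b j) - a i + b j) *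
        Complex.normSq ((Uᴴ * V) i j) := fun i j =>
    mul_nonneg (wl_scalar (ha i) (hb j)).1 (Complex.normSq_nonneg _)
  have hs : 0 ≤ (A * matLog A).trace.re - (A * matLog B).trace.re := by
    rw [e5]; exact Finset.sum_nonneg fun i _ => Finset.sum_nonneg fun j _ => hnn i j
  refine ⟨by linarith, fun heq => ?_⟩
  have hz : ∑ i, ∑ j, (a i * Real.log (a i) - a i * Real.log (b j) - a i + b j) *
        Complex.normSq ((Uᴴ * V) i j) = 0 := by rw [← e5]; linarith
  have hz' : ∀ i j, (a i * Real.log (a i) - a i * Real.log (b j) - a i + b j) *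
        Complex.normSq ((Uᴴ * V) i j) = 0 := by
    intro i j
    have h1 := (Finset.sum_eq_zero_iff_of_nonneg
      (fun i _ => Finset.sum_nonneg fun j _ => hnn i j)).1 hz i (Finset.mem_univ i)
    exact (Finset.sum_eq_zero_iff_of_nonneg (fun j _ => hnn i j)).1 h1 j (Finset.mem_univ j)
  have hcomm : diagonal (fun i => (a i : ℂ)) * (Uᴴ * V) =
      (Uᴴ * V) * diagonal (fun j => (b j : ℂ)) := by
    ext i j
    rw [diagonal_mul, mul_diagonal]
    rcases mul_eq_zero.1 (hz' i j) with h | h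
    · rw [(wl_scalar (ha i) (hb j)).2 h, mul_comm]
    · rw [Complex.normSq_eq_zero.1 h]; simp
  calc B = (U * Uᴴ) * (V * diagonal (fun j => (b j : ℂ)) * Vᴴ) := by
        rw [hU2, Matrix.one_mul]; exact hBe
    _ = U * ((Uᴴ * V) * diagonal (fun j => (b j : ℂ))) * Vᴴ := by
        simp only [Matrix.mul_assoc]
    _ = (U * diagonal (fun i => (a i : ℂ)) * Uᴴ) * (V * Vᴴ) := by
        rw [← hcomm]; simp only [Matrix.mul_assoc]
    _ = A := by rw [hV2, Matrix.mul_one]; exact hAe.symm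

theorem wl_pinch {d n : ℕ} (P : Fin n → Matrix (Fin d) (Fin d) ℂ)
    (horth : ∀ i j, P i * P j = if i = j then P i else 0)
    (hsum : ∑ i, P i = 1) (ψ L : Matrix (Fin d) (Fin d) ℂ) (hL : ∀ i, L * P i = P i * L) :
    ((∑ i, P i * ψ * P i) * L).trace = (ψ * L).trace := by
  have h : ∀ i, (P i * ψ * P i * L).trace = (ψ * L * P i).trace := by
    intro i
    have hi : P i * P i = P i := by simp [horth]
    have : P i * ψ * P i * L = P i * (ψ * P i * L) := by simp only [Matrix.mul_assoc]
    rw [this, Matrix.trace_mul_comm, Matrix.mul_assoc (ψ * P i), hL, Matrix.mul_assoc ψ,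
      ← Matrix.mul_assoc (P i), hi, ← hL, Matrix.mul_assoc]
  rw [Finset.sum_mul, Matrix.trace_sum]
  simp only [h]
  rw [← Matrix.trace_sum, ← Finset.mul_sum, hsum, Matrix.mul_one]

theorem wl_log_comm {d : ℕ} {φ Q : Matrix (Fin d) (Fin d) ℂ} (h : φ * Q = Q * φ) :
    matLog φ * Q = Q * matLog φ := by
  have : Commute φ Q := h
  exact (this.cfc_real Real.log)

theorem wl_mem {d n : ℕ} (P : Fin n → Matrix (Fin d) (Fin d) ℂ)
    (hPH : ∀ i, (P i)ᴴ = P i)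
    (horth : ∀ i j, P i * P j = if i = j then P i else 0)
    (hsum : ∑ i, P i = 1)
    (ψ : Matrix (Fin d) (Fin d) ℂ) (hψ : ψ.PosDef) :
    (∑ i, P i * ψ * P i).PosDef := by
  refine Matrix.PosDef.of_dotProduct_mulVec_pos ?_ ?_
  · unfold Matrix.IsHermitian
    rw [conjTranspose_sum]
    refine Finset.sum_congr rfl fun i _ => ?_
    rw [conjTranspose_mul, conjTranspose_mul, hPH, hψ.1.eq, Matrix.mul_assoc]
  · intro x hx
    have hterm : ∀ i, star x ⬝ᵥ ((P i * ψ * P i) *ᵥ x) =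
        star (P i *ᵥ x) ⬝ᵥ (ψ *ᵥ (P i *ᵥ x)) := by
      intro i
      rw [star_mulVec, hPH, ← Matrix.dotProduct_mulVec, mulVec_mulVec, mulVec_mulVec,
        Matrix.mul_assoc]
    rw [Matrix.sum_mulVec, dotProduct_sum]
    simp only [hterm]
    have hex : ∃ i, P i *ᵥ x ≠ 0 := by
      by_contra hcon
      push Not at hcon
      apply hx
      rw [← Matrix.one_mulVec x, ← hsum, Matrix.sum_mulVec]
      exact Finset.sum_eq_zero fun i _ => hcon i
    obtain ⟨i, hi⟩ := hex
    exact Finset.sum_pos' (fun j _ => hψ.posSemidef.dotProduct_mulVec_nonneg _)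
      ⟨i, Finset.mem_univ i, hψ.dotProduct_mulVec_pos hi⟩

/-- Weak Lüders rule as entropic projection: given mutually orthogonal projections
`P 1, …, P n` summing to `1` and a positive definite density matrix `ψ`, the state
`ρ := ∑ i, P i * ψ * P i` belongs to
`Q_L = {φ | φ positive definite density matrix, φ commutes with every P i}` and is the unique
minimiser of `D₀(·, ψ)` on `Q_L`. -/
theorem weak_lueders_entropic_projection {d n : ℕ} (hd : 1 ≤ d)
    (P : Fin n → Matrix (Fin d) (Fin d) ℂ)
    (hPH : ∀ i, (P i)ᴴ = P i)
    (horth : ∀ i j, P i * P j = if i = j then P i else 0)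
    (hsum : ∑ i, P i = 1)
    (ψ : Matrix (Fin d) (Fin d) ℂ) (hψ : ψ.PosDef) (hψ1 : ψ.trace = 1)
    (QL : Set (Matrix (Fin d) (Fin d) ℂ))
    (hQL : QL = {φ | φ.PosDef ∧ φ.trace = 1 ∧ ∀ i, φ * P i = P i * φ}) :
    (∑ i, P i * ψ * P i) ∈ QL ∧
      ∀ φ ∈ QL,
        umegakiD0 (∑ i, P i * ψ * P i) ψ ≤ umegakiD0 φ ψ ∧
          (umegakiD0 φ ψ = umegakiD0 (∑ i, P i * ψ * P i) ψ ↔ φ = ∑ i, P i * ψ * P i) := by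
  subst hQL
  have hρ := wl_mem P hPH horth hsum ψ hψ
  have hρt : (∑ i, P i * ψ * P i).trace = 1 := by
    have := wl_pinch P horth hsum ψ 1 (by simp)
    rwa [Matrix.mul_one, Matrix.mul_one, hψ1] at this
  have hρc : ∀ j, (∑ i, P i * ψ * P i) * P j = P j * (∑ i, P i * ψ * P i) := by
    intro j
    rw [Finset.sum_mul, Finset.mul_sum]
    refine Finset.sum_congr rfl fun i _ => ?_
    rw [Matrix.mul_assoc (P i * ψ), horth, ← Matrix.mul_assoc (P j), ← Matrix.mul_assoc (P j), horth]
    by_cases hij : i = j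
    · subst hij; simp [Matrix.mul_assoc]
    · simp [hij, Ne.symm hij]
  refine ⟨⟨hρ, hρt, hρc⟩, ?_⟩
  rintro φ ⟨hφ, hφt, hφc⟩
  have k := wl_klein hρ hφ (hρt.trans hφt.symm)
  rw [wl_pinch P horth hsum ψ _ (fun i => wl_log_comm (hφc i)),
    wl_pinch P horth hsum ψ _ (fun i => wl_log_comm (hρc i))] at k
  simp only [umegakiD0, Matrix.mul_sub, Matrix.trace_sub, Complex.sub_re]
  refine ⟨by linarith [k.1], fun h => k.2 (by linarith), fun h => by rw [← h]⟩
end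

section
/- Let ρ and ρ_new be density matrices in M_d(ℂ), let {P_1,…,P_n} be projections with P_i·P_j = δ_ij·P_i for all i,j and P_1 + … + P_n = 1, and assume tr(ρ·P_i) ≠ 0, tr(ρ_new·P_i) ≠ 0, and ρ_new·P_i = P_i·ρ_new for all i. Then ρ_new = Σ_{i=1}^n tr(ρ_new·P_i)·(P_i·ρ·P_i)/tr(ρ·P_i) if and only if for every projection P ∈ M_d(ℂ) commuting with every P_i one has tr(ρ_new·P_i·P)·tr(ρ·P_i) = tr(ρ·P_i·P)·tr(ρ_new·P_i) for all i ∈ {1,…,n}. -/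
open Matrix
open scoped ComplexOrder

theorem qj_zero_of_quad {d : ℕ} (X : Matrix (Fin d) (Fin d) ℂ)
    (h : ∀ w : Fin d → ℂ, star w ⬝ᵥ (X *ᵥ w) = 0) : X = 0 := by
  have h2 : Matrix.toEuclideanLin X = 0 := by
    rw [← inner_map_self_eq_zero]
    intro x
    have := h x.ofLp
    rw [← inner_conj_symm, EuclideanSpace.inner_eq_star_dotProduct]
    rw [dotProduct_comm] at this
    simp only [Matrix.toLpLin_apply]
    rw [this]
    simp
  exact (Matrix.toEuclideanLin (𝕜 := ℂ)).map_eq_zero_iff.mp h2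

/-- characterisation of the quantum Jeffrey rule.  For density matrices `ρ`, `ρnew`
and mutually orthogonal projections `P 1, …, P n` summing to `1`, with `tr(ρ P i) ≠ 0`,
`tr(ρnew P i) ≠ 0` and `ρnew` commuting with every `P i`, one has
`ρnew = ∑ i, (tr(ρnew P i)/tr(ρ P i)) • (P i ρ P i)` iff for every projection `P` commuting with
every `P i`, `tr(ρnew P i P) tr(ρ P i) = tr(ρ P i P) tr(ρnew P i)` for all `i`. -/
theorem quantum_jeffrey_characterisation {d n : ℕ} (hd : 1 ≤ d)
    (P : Fin n → Matrix (Fin d) (Fin d) ℂ)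
    (hPH : ∀ i, (P i)ᴴ = P i)
    (horth : ∀ i j, P i * P j = if i = j then P i else 0)
    (hsum : ∑ i, P i = 1)
    (ρ ρnew : Matrix (Fin d) (Fin d) ℂ)
    (hρ : ρ.PosSemidef) (hρ1 : ρ.trace = 1)
    (hρnew : ρnew.PosSemidef) (hρnew1 : ρnew.trace = 1)
    (hρP : ∀ i, Matrix.trace (ρ * P i) ≠ 0)
    (hρnewP : ∀ i, Matrix.trace (ρnew * P i) ≠ 0)
    (hcomm : ∀ i, ρnew * P i = P i * ρnew) :
    ρnew = ∑ i, (Matrix.trace (ρnew * P i) / Matrix.trace (ρ * P i)) • (P i * ρ * P i) ↔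
      ∀ Q : Matrix (Fin d) (Fin d) ℂ, Qᴴ = Q → Q * Q = Q → (∀ i, Q * P i = P i * Q) →
        ∀ i, Matrix.trace (ρnew * P i * Q) * Matrix.trace (ρ * P i) =
          Matrix.trace (ρ * P i * Q) * Matrix.trace (ρnew * P i) := by
  have hPP : ∀ i, P i * P i = P i := fun i => by simp [horth]
  constructor
  · intro h Q hQH hQQ hQP i
    have h1 : ρnew * P i =
        (Matrix.trace (ρnew * P i) / Matrix.trace (ρ * P i)) • (P i * ρ * P i) := by
      conv_lhs => rw [h]
      rw [Finset.sum_mul, Finset.sum_eq_single i]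
      · rw [smul_mul_assoc, mul_assoc _ (P i) (P i), hPP]
      · intro j _ hj
        rw [smul_mul_assoc, mul_assoc _ (P j) (P i), horth, if_neg hj]
        simp
      · simp
    have h2 : Matrix.trace (P i * ρ * P i * Q) = Matrix.trace (ρ * P i * Q) := by
      rw [mul_assoc, mul_assoc, Matrix.trace_mul_comm, mul_assoc, mul_assoc, hQP, ← mul_assoc (P i) (P i), hPP,
        mul_assoc]
    have h3 : Matrix.trace (ρnew * P i * Q) =
        (Matrix.trace (ρnew * P i) / Matrix.trace (ρ * P i)) * Matrix.trace (ρ * P i * Q) := by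
      conv_lhs => rw [h1]
      rw [smul_mul_assoc, Matrix.trace_smul, h2, smul_eq_mul]
    rw [h3]
    field_simp [hρP i]
  · intro h
    have key : ∀ i, Matrix.trace (ρ * P i) • (ρnew * P i)
        - Matrix.trace (ρnew * P i) • (P i * ρ * P i) = 0 := by
      intro i
      apply qj_zero_of_quad
      intro w
      set v := P i *ᵥ w with hv
      have hPv : P i *ᵥ v = v := by rw [hv, Matrix.mulVec_mulVec, hPP]
      have hvP : ∀ j, star v ᵥ* P j = star (P j *ᵥ v) := by
        intro j
        rw [Matrix.star_mulVec (P j) v, hPH]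
      have hwP : star w ᵥ* P i = star v := by
        rw [hv, Matrix.star_mulVec, hPH]
      have hPjv : ∀ j, j ≠ i → P j *ᵥ v = 0 := by
        intro j hj
        rw [hv, Matrix.mulVec_mulVec, horth, if_neg hj, Matrix.zero_mulVec]
      have e1 : star w ⬝ᵥ ((ρnew * P i) *ᵥ w) = star v ⬝ᵥ (ρnew *ᵥ v) := by
        have : ρnew * P i = P i * (ρnew * P i) := by
          rw [hcomm, ← mul_assoc, hPP]
        rw [this, ← Matrix.mulVec_mulVec, ← Matrix.mulVec_mulVec, Matrix.dotProduct_mulVec, hwP]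
      have e2 : star w ⬝ᵥ ((P i * ρ * P i) *ᵥ w) = star v ⬝ᵥ (ρ *ᵥ v) := by
        rw [mul_assoc, ← Matrix.mulVec_mulVec, ← Matrix.mulVec_mulVec, Matrix.dotProduct_mulVec, hwP]
      rw [Matrix.sub_mulVec, Matrix.smul_mulVec, Matrix.smul_mulVec, dotProduct_sub,
        dotProduct_smul, dotProduct_smul, e1, e2]
      by_cases hv0 : v = 0
      · simp [hv0]
      have hc : star v ⬝ᵥ v ≠ 0 := by
        rwa [Ne, dotProduct_star_self_eq_zero]
      have hcs : star (star v ⬝ᵥ v) = star v ⬝ᵥ v := by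
        rw [← Matrix.star_dotProduct]
      have hQ := h ((star v ⬝ᵥ v)⁻¹ • vecMulVec v (star v)) ?_ ?_ ?_ i
      · have tr : ∀ A : Matrix (Fin d) (Fin d) ℂ,
            Matrix.trace (A * P i * ((star v ⬝ᵥ v)⁻¹ • vecMulVec v (star v)))
              = (star v ⬝ᵥ v)⁻¹ * (star v ⬝ᵥ (A *ᵥ v)) := by
          intro A
          rw [mul_smul_comm, Matrix.trace_smul, smul_eq_mul, Matrix.mul_vecMulVec,
            Matrix.trace_vecMulVec, ← Matrix.mulVec_mulVec, hPv, dotProduct_comm (A *ᵥ v)]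
        rw [tr, tr] at hQ
        field_simp at hQ
        simp only [smul_eq_mul]
        linear_combination hQ
      · rw [Matrix.conjTranspose_smul, Matrix.conjTranspose_vecMulVec, star_star, star_inv₀, hcs]
      · rw [smul_mul_smul_comm, Matrix.vecMulVec_mul_vecMulVec, Matrix.vecMulVec_smul, smul_smul]
        congr 1
        field_simp
      · intro j
        rw [smul_mul_assoc, mul_smul_comm, Matrix.vecMulVec_mul, Matrix.mul_vecMulVec, hvP]
        by_cases hj : j = i
        · rw [hj, hPv]
        · rw [hPjv j hj]; simp
    calc ρnew = ∑ i, ρnew * P i := by rw [← Finset.mul_sum, hsum, mul_one]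
      _ = _ := by
        refine Finset.sum_congr rfl fun i _ => ?_
        have hk := sub_eq_zero.mp (key i)
        rw [div_eq_inv_mul, mul_smul, ← hk, smul_smul, inv_mul_cancel₀ (hρP i), one_smul]
end

section
/- (Quantum Jeffrey's rule as entropic projection.) Let {P_1,…,P_n} ⊆ M_d(ℂ) be nonzero projections with P_i·P_j = δ_ij·P_i for all i,j and P_1 + … + P_n = 1, let ψ be a positive definite density matrix (so Re tr(ψ·P_i) > 0 for each i), and let λ_1,…,λ_n be real numbers with λ_i > 0 and Σ_i λ_i = 1. Let Q := { ω : ω is a positive definite density matrix, ω·P_i = P_i·ω for all i, and Re tr(ω·P_i) = λ_i for all i }. Set ρ := Σ_{i=1}^n λ_i·(P_i·ψ·P_i)/(Re tr(ψ·P_i)). Then ρ ∈ Q, and ρ is the unique minimiser of D₀(·,ψ) on Q: for every φ ∈ Q, D₀(ρ,ψ) ≤ D₀(φ,ψ), with equality if and only if φ = ρ. -/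
open Matrix
open scoped ComplexOrder

theorem qj_trace_formula {d : ℕ} (S U V : Matrix (Fin d) (Fin d) ℂ) (hS : Sᴴ = S)
    (a b : Fin d → ℝ) :
    (trace (S * (U * diagonal (fun i => (a i : ℂ)) * Uᴴ) * S *
      (V * diagonal (fun i => (b i : ℂ)) * Vᴴ))).re =
      ∑ j, ∑ k, a j * b k * Complex.normSq ((Uᴴ * S * V) j k) := by
  have h1 : trace (S * (U * diagonal (fun i => (a i : ℂ)) * Uᴴ) * S *
      (V * diagonal (fun i => (b i : ℂ)) * Vᴴ)) =
      trace ((diagonal (fun i => (a i : ℂ)) * (Uᴴ * S * V)) *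
        (diagonal (fun i => (b i : ℂ)) * (Uᴴ * S * V)ᴴ)) := by
    rw [show S * (U * diagonal (fun i => (a i : ℂ)) * Uᴴ) * S *
      (V * diagonal (fun i => (b i : ℂ)) * Vᴴ) = (S * U) *
      (diagonal (fun i => (a i : ℂ)) * (Uᴴ * S * V) * diagonal (fun i => (b i : ℂ)) * Vᴴ) by
        simp only [Matrix.mul_assoc], trace_mul_comm]
    simp only [conjTranspose_mul, conjTranspose_conjTranspose, hS, Matrix.mul_assoc]
  rw [h1]
  generalize Uᴴ * S * V = W
  simp only [trace, diag, Matrix.mul_apply (M := diagonal _ * W), diagonal_mul,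
    conjTranspose_apply, Complex.re_sum]
  refine Finset.sum_congr rfl fun j _ => Finset.sum_congr rfl fun k _ => ?_
  simp [Complex.normSq_apply]
  ring

theorem qj_scalar {r f : ℝ} (hr : 0 < r) (hf : 0 < f) :
    0 ≤ r * Real.log r - r * Real.log f - r + f ∧
    (r * Real.log r - r * Real.log f - r + f = 0 → r = f) := by
  have e : Real.log (f / r) = Real.log f - Real.log r := Real.log_div hf.ne' hr.ne'
  have hq : 0 < f / r := div_pos hf hr
  have hm : r * (f / r) = f := by field_simp
  constructor
  · have := mul_le_mul_of_nonneg_left (Real.log_le_sub_one_of_pos hq) hr.le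
    rw [e] at this; nlinarith
  · intro h
    by_contra hne
    have h1 : f / r ≠ 1 := fun h => hne ((div_eq_one_iff_eq hr.ne').1 h).symm
    have := mul_lt_mul_of_pos_left (Real.log_lt_sub_one_of_pos hq h1) hr
    rw [e] at this; nlinarith

theorem qj_klein {d : ℕ} (A B S : Matrix (Fin d) (Fin d) ℂ) (hA : A.PosDef) (hB : B.PosDef)
    (hS : Sᴴ = S) :
    0 ≤ (trace (S * (A * matLog A) * S)).re - (trace (S * A * S * matLog B)).re
      - (trace (S * A * S)).re + (trace (S * S * B)).re ∧
    ((trace (S * (A * matLog A) * S)).re - (trace (S * A * S * matLog B)).re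
      - (trace (S * A * S)).re + (trace (S * S * B)).re = 0 → A * S = S * B) := by
  obtain ⟨U, a, ha, hU, hU', eA, eLA⟩ : ∃ (U : Matrix (Fin d) (Fin d) ℂ) (a : Fin d → ℝ),
      (∀ i, 0 < a i) ∧ Uᴴ * U = 1 ∧ U * Uᴴ = 1 ∧ A = U * diagonal (fun i => (a i : ℂ)) * Uᴴ ∧
      matLog A = U * diagonal (fun i => ((Real.log (a i) : ℝ) : ℂ)) * Uᴴ := by
    refine ⟨hA.1.eigenvectorUnitary, hA.1.eigenvalues, hA.eigenvalues_pos,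
      Unitary.coe_star_mul_self _, Unitary.coe_mul_star_self _, hA.1.spectral_theorem, ?_⟩
    rw [matLog, hA.1.cfc_eq]; rfl
  obtain ⟨V, b, hb, hV, hV', eB, eLB⟩ : ∃ (U : Matrix (Fin d) (Fin d) ℂ) (a : Fin d → ℝ),
      (∀ i, 0 < a i) ∧ Uᴴ * U = 1 ∧ U * Uᴴ = 1 ∧ B = U * diagonal (fun i => (a i : ℂ)) * Uᴴ ∧
      matLog B = U * diagonal (fun i => ((Real.log (a i) : ℝ) : ℂ)) * Uᴴ := by
    refine ⟨hB.1.eigenvectorUnitary, hB.1.eigenvalues, hB.eigenvalues_pos,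
      Unitary.coe_star_mul_self _, Unitary.coe_mul_star_self _, hB.1.spectral_theorem, ?_⟩
    rw [matLog, hB.1.cfc_eq]; rfl
  have oneV : (1 : Matrix (Fin d) (Fin d) ℂ) =
      V * diagonal (fun i => (((fun _ => 1 : Fin d → ℝ) i : ℝ) : ℂ)) * Vᴴ := by
    simp [hV']
  have oneU : (1 : Matrix (Fin d) (Fin d) ℂ) =
      U * diagonal (fun i => (((fun _ => 1 : Fin d → ℝ) i : ℝ) : ℂ)) * Uᴴ := by
    simp [hU']
  have eAL : A * matLog A = U * diagonal (fun i => ((a i * Real.log (a i) : ℝ) : ℂ)) * Uᴴ := by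
    rw [eLA, eA]
    have : U * diagonal (fun i => (a i : ℂ)) * Uᴴ *
      (U * diagonal (fun i => ((Real.log (a i) : ℝ) : ℂ)) * Uᴴ) =
      U * (diagonal (fun i => (a i : ℂ)) * (Uᴴ * U) *
        diagonal (fun i => ((Real.log (a i) : ℝ) : ℂ))) * Uᴴ := by
      simp only [Matrix.mul_assoc]
    rw [this, hU, Matrix.mul_one, diagonal_mul_diagonal]
    simp
  have t1 : (trace (S * (A * matLog A) * S)).re =
      ∑ j, ∑ k, (a j * Real.log (a j)) * 1 * Complex.normSq ((Uᴴ * S * V) j k) := by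
    rw [← qj_trace_formula S U V hS (fun j => a j * Real.log (a j)) (fun _ => 1), ← oneV,
      ← eAL, Matrix.mul_one]
  have t2 : (trace (S * A * S * matLog B)).re =
      ∑ j, ∑ k, a j * Real.log (b k) * Complex.normSq ((Uᴴ * S * V) j k) := by
    rw [← qj_trace_formula S U V hS a (fun k => Real.log (b k)), ← eLB, ← eA]
  have t3 : (trace (S * A * S)).re =
      ∑ j, ∑ k, a j * 1 * Complex.normSq ((Uᴴ * S * V) j k) := by
    rw [← qj_trace_formula S U V hS a (fun _ => 1), ← oneV, ← eA, Matrix.mul_one]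
  have t4 : (trace (S * S * B)).re =
      ∑ j, ∑ k, 1 * b k * Complex.normSq ((Uᴴ * S * V) j k) := by
    rw [← qj_trace_formula S U V hS (fun _ => 1) b, ← oneU, ← eB, Matrix.mul_one]
  have key : (trace (S * (A * matLog A) * S)).re - (trace (S * A * S * matLog B)).re
      - (trace (S * A * S)).re + (trace (S * S * B)).re =
      ∑ j, ∑ k, (a j * Real.log (a j) - a j * Real.log (b k) - a j + b k) *
        Complex.normSq ((Uᴴ * S * V) j k) := by
    rw [t1, t2, t3, t4]
    simp only [← Finset.sum_sub_distrib, ← Finset.sum_add_distrib]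
    refine Finset.sum_congr rfl fun j _ => Finset.sum_congr rfl fun k _ => ?_
    ring
  have nn : ∀ j k, 0 ≤ (a j * Real.log (a j) - a j * Real.log (b k) - a j + b k) *
        Complex.normSq ((Uᴴ * S * V) j k) := fun j k =>
    mul_nonneg (qj_scalar (ha j) (hb k)).1 (Complex.normSq_nonneg _)
  rw [key]
  refine ⟨Finset.sum_nonneg fun j _ => Finset.sum_nonneg fun k _ => nn j k, fun h => ?_⟩
  have h0 : ∀ j k, (a j : ℂ) * (Uᴴ * S * V) j k = (Uᴴ * S * V) j k * (b k : ℂ) := by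
    intro j k
    have hj := (Finset.sum_eq_zero_iff_of_nonneg
      (fun j _ => Finset.sum_nonneg fun k _ => nn j k)).1 h j (Finset.mem_univ _)
    have hk := (Finset.sum_eq_zero_iff_of_nonneg (fun k _ => nn j k)).1 hj k (Finset.mem_univ _)
    rcases mul_eq_zero.1 hk with h | h
    · rw [(qj_scalar (ha j) (hb k)).2 h, mul_comm]
    · rw [Complex.normSq_eq_zero.1 h]; simp
  have hD : diagonal (fun i => (a i : ℂ)) * (Uᴴ * S * V) =
      (Uᴴ * S * V) * diagonal (fun i => (b i : ℂ)) := by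
    ext j k
    rw [diagonal_mul, mul_diagonal, h0]
  calc A * S = U * (diagonal (fun i => (a i : ℂ)) * (Uᴴ * S * V)) * Vᴴ := by
        rw [eA]
        rw [show U * (diagonal (fun i => (a i : ℂ)) * (Uᴴ * S * V)) * Vᴴ =
          U * diagonal (fun i => (a i : ℂ)) * Uᴴ * S * (V * Vᴴ) by
            simp only [Matrix.mul_assoc], hV', Matrix.mul_one]
    _ = S * B := by
        rw [hD, eB]
        rw [show U * (Uᴴ * S * V * diagonal (fun i => (b i : ℂ))) * Vᴴ =
          (U * Uᴴ) * (S * (V * diagonal (fun i => (b i : ℂ)) * Vᴴ)) by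
            simp only [Matrix.mul_assoc], hU', Matrix.one_mul]

/-- Quantum Jeffrey'\''s rule as entropic projection: for nonzero mutually orthogonal
projections `P 1, …, P n` summing to `1`, a positive definite density matrix `ψ`, and weights
`l i > 0` with `∑ i, l i = 1`, the state `ρ := ∑ i, (l i / Re tr(ψ P i)) • (P i ψ P i)` belongs
to `Q = {ω | ω positive definite density matrix, ω commutes with every P i, Re tr(ω P i) = l i}`
and is the unique minimiser of `D₀(·, ψ)` on `Q`. -/
theorem quantum_jeffrey_entropic_projection {d n : ℕ} (hd : 1 ≤ d)
    (P : Fin n → Matrix (Fin d) (Fin d) ℂ)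
    (hPne : ∀ i, P i ≠ 0)
    (hPH : ∀ i, (P i)ᴴ = P i)
    (horth : ∀ i j, P i * P j = if i = j then P i else 0)
    (hsum : ∑ i, P i = 1)
    (ψ : Matrix (Fin d) (Fin d) ℂ) (hψ : ψ.PosDef) (hψ1 : ψ.trace = 1)
    (l : Fin n → ℝ) (hl : ∀ i, 0 < l i) (hl1 : ∑ i, l i = 1)
    (Q : Set (Matrix (Fin d) (Fin d) ℂ))
    (hQ : Q = {ω | ω.PosDef ∧ ω.trace = 1 ∧ (∀ i, ω * P i = P i * ω) ∧
      ∀ i, (Matrix.trace (ω * P i)).re = l i}) :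
    (∑ i, (l i / (Matrix.trace (ψ * P i)).re) • (P i * ψ * P i)) ∈ Q ∧
      ∀ φ ∈ Q,
        umegakiD0 (∑ i, (l i / (Matrix.trace (ψ * P i)).re) • (P i * ψ * P i)) ψ ≤
            umegakiD0 φ ψ ∧
          (umegakiD0 φ ψ =
              umegakiD0 (∑ i, (l i / (Matrix.trace (ψ * P i)).re) • (P i * ψ * P i)) ψ ↔
            φ = ∑ i, (l i / (Matrix.trace (ψ * P i)).re) • (P i * ψ * P i)) := by
  classical
  have hidem : ∀ i, P i * P i = P i := fun i => by simp [horth]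
  set p : Fin n → ℝ := fun i => (Matrix.trace (ψ * P i)).re with hp
  have hps : ∀ i, (P i * ψ * P i).PosSemidef := fun i => by
    have := hψ.posSemidef.conjTranspose_mul_mul_same (P i)
    rwa [hPH] at this
  have htr : ∀ i, trace (P i * ψ * P i) = trace (ψ * P i) := fun i => by
    rw [Matrix.mul_assoc, trace_mul_comm, Matrix.mul_assoc, hidem]
  have hpC : ∀ i, trace (ψ * P i) = (p i : ℂ) := fun i => by
    have h := (hps i).trace_nonneg
    rw [htr] at h
    exact Complex.ext rfl (by simpa using (Complex.le_def.1 h).2.symm)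
  have hpsum : ∑ i, p i = 1 := by
    have : ∑ i, (p i : ℂ) = 1 := by
      simp only [← hpC]
      rw [← trace_sum, ← Finset.mul_sum, hsum, Matrix.mul_one, hψ1]
    exact_mod_cast this
  have hppos : ∀ i, 0 < p i := fun i => by
    have h := (hps i).trace_nonneg
    rw [htr, hpC] at h
    have h' : 0 ≤ p i := by exact_mod_cast h
    refine lt_of_le_of_ne h' fun h0 => hPne i ?_
    have hz : P i * ψ * P i = 0 := by
      rw [← (hps i).trace_eq_zero_iff, htr, hpC, ← h0]; simp
    ext1 x y
    by_contra hne
    have hv : P i *ᵥ (Pi.single y 1) ≠ 0 := fun h => hne (by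
      have := congrFun h x
      simpa using this)
    have := hψ.dotProduct_mulVec_pos hv
    rw [star_mulVec, hPH, ← dotProduct_mulVec, mulVec_mulVec, mulVec_mulVec,
      hz] at this
    simp at this
  set c : Fin n → ℝ := fun i => l i / p i with hc
  have hcpos : ∀ i, 0 < c i := fun i => div_pos (hl i) (hppos i)
  change (∑ i, c i • (P i * ψ * P i)) ∈ Q ∧ ∀ φ ∈ Q,
        umegakiD0 (∑ i, c i • (P i * ψ * P i)) ψ ≤ umegakiD0 φ ψ ∧
          (umegakiD0 φ ψ = umegakiD0 (∑ i, c i • (P i * ψ * P i)) ψ ↔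
            φ = ∑ i, c i • (P i * ψ * P i))
  set ρ := ∑ i, c i • (P i * ψ * P i) with hρ
  have hρP : ∀ i, ρ * P i = c i • (P i * ψ * P i) := fun i => by
    rw [hρ, Finset.sum_mul, Finset.sum_eq_single i]
    · rw [smul_mul_assoc, Matrix.mul_assoc _ (P i) (P i), hidem]
    · intro j _ hj
      rw [smul_mul_assoc, Matrix.mul_assoc _ (P j) (P i), horth, if_neg hj]; simp
    · simp
  have hPρ : ∀ i, P i * ρ = c i • (P i * ψ * P i) := fun i => by
    rw [hρ, Finset.mul_sum, Finset.sum_eq_single i]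
    · rw [mul_smul_comm, ← Matrix.mul_assoc, ← Matrix.mul_assoc, hidem]
    · intro j _ hj
      rw [mul_smul_comm, ← Matrix.mul_assoc, ← Matrix.mul_assoc, horth, if_neg (Ne.symm hj)]; simp
    · simp
  have hρPD : ρ.PosDef := by
    refine PosDef.of_dotProduct_mulVec_pos ?_ fun x hx => ?_
    · rw [IsHermitian, hρ, conjTranspose_sum]
      refine Finset.sum_congr rfl fun i _ => ?_
      rw [conjTranspose_smul, (hps i).1]; simp
    · have e : star x ⬝ᵥ ρ *ᵥ x =
          ∑ i, (c i : ℂ) * (star (P i *ᵥ x) ⬝ᵥ ψ *ᵥ (P i *ᵥ x)) := by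
        rw [hρ, sum_mulVec, dotProduct_sum]
        refine Finset.sum_congr rfl fun i _ => ?_
        rw [smul_mulVec, dotProduct_smul, star_mulVec, hPH, ← dotProduct_mulVec, mulVec_mulVec,
          mulVec_mulVec]
        simp
      rw [e]
      have hcC : ∀ i, (0:ℂ) < (c i : ℂ) := fun i => by exact_mod_cast hcpos i
      refine Finset.sum_pos' (fun i _ => mul_nonneg (hcC i).le
        (hψ.posSemidef.dotProduct_mulVec_nonneg _)) ?_
      by_contra hcon
      push Not at hcon
      apply hx
      rw [← one_mulVec x, ← hsum, sum_mulVec]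
      refine Finset.sum_eq_zero fun i hi => ?_
      by_contra hne
      exact hcon i hi (mul_pos (hcC i) (hψ.dotProduct_mulVec_pos hne))
  have hρt : ∀ i, trace (ρ * P i) = (l i : ℂ) := fun i => by
    rw [hρP, trace_smul, htr, hpC, hc]
    have := (hppos i).ne'
    rw [Complex.real_smul, ← Complex.ofReal_mul]
    congr 1
    field_simp
  have hρ1 : ρ.trace = 1 := by
    rw [← Matrix.mul_one ρ, ← hsum, Finset.mul_sum, trace_sum]
    simp only [hρt]
    exact_mod_cast hl1
  refine ⟨by rw [hQ]; exact ⟨hρPD, hρ1, fun i => by rw [hρP, hPρ], fun i => by rw [hρt]; simp⟩, ?_⟩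
  intro φ hφ
  rw [hQ] at hφ
  obtain ⟨hφPD, hφ1, hφP, hφl⟩ := hφ
  -- the weight
  set s : Fin n → ℝ := fun i => √((c i)⁻¹) with hs
  have hss : ∀ i, s i * s i = (c i)⁻¹ := fun i =>
    Real.mul_self_sqrt (inv_pos.2 (hcpos i)).le
  have hspos : ∀ i, 0 < s i := fun i => Real.sqrt_pos.2 (inv_pos.2 (hcpos i))
  have hmul : ∀ f g : Fin n → ℝ, (∑ i, f i • P i) * (∑ i, g i • P i) =
      ∑ i, (f i * g i) • P i := fun f g => by
    rw [Finset.sum_mul]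
    refine Finset.sum_congr rfl fun i _ => ?_
    rw [Finset.mul_sum, Finset.sum_eq_single i]
    · rw [smul_mul_smul_comm, hidem]
    · intro j _ hj
      rw [smul_mul_smul_comm, horth, if_neg (Ne.symm hj), smul_zero]
    · simp
  set S := ∑ i, s i • P i with hSdef
  have hSH : Sᴴ = S := by
    rw [hSdef, conjTranspose_sum]
    refine Finset.sum_congr rfl fun i _ => ?_
    rw [conjTranspose_smul, hPH]; simp
  have hSS : S * S = ∑ i, (c i)⁻¹ • P i := by
    rw [hSdef, hmul]; simp only [hss]
  have hSinv : S * (∑ i, (s i)⁻¹ • P i) = 1 := by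
    rw [hSdef, hmul, ← hsum]
    refine Finset.sum_congr rfl fun i _ => ?_
    rw [mul_inv_cancel₀ (hspos i).ne', one_smul]
  have hScomm : ∀ X : Matrix (Fin d) (Fin d) ℂ, (∀ i, X * P i = P i * X) → X * S = S * X := by
    intro X hX
    rw [hSdef, Finset.mul_sum, Finset.sum_mul]
    refine Finset.sum_congr rfl fun i _ => ?_
    rw [mul_smul_comm, hX, smul_mul_assoc]
  have hρc : ∀ i, ρ * P i = P i * ρ := fun i => by rw [hρP, hPρ]
  have hLφ : ∀ i, matLog φ * P i = P i * matLog φ := fun i =>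
    Commute.cfc_real (show Commute φ (P i) from hφP i) Real.log
  have hLρ : ∀ i, matLog ρ * P i = P i * matLog ρ := fun i =>
    Commute.cfc_real (show Commute ρ (P i) from hρc i) Real.log
  have hσ : S * ρ * S = ∑ i, P i * ψ * P i := by
    rw [Matrix.mul_assoc, hScomm ρ hρc, ← Matrix.mul_assoc, hSS, Finset.sum_mul]
    refine Finset.sum_congr rfl fun i _ => ?_
    rw [smul_mul_assoc, hPρ, smul_smul, inv_mul_cancel₀ (hcpos i).ne', one_smul]
  have hpin : ∀ L : Matrix (Fin d) (Fin d) ℂ, (∀ i, L * P i = P i * L) →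
      trace (S * ρ * S * L) = trace (ψ * L) := by
    intro L hL
    rw [hσ, Finset.sum_mul, trace_sum]
    have : ∀ i, trace (P i * ψ * P i * L) = trace (ψ * L * P i) := fun i => by
      rw [Matrix.mul_assoc, Matrix.mul_assoc, trace_mul_comm, ← hL, Matrix.mul_assoc,
        Matrix.mul_assoc, hidem, Matrix.mul_assoc]
    simp only [this]
    rw [← trace_sum, ← Finset.mul_sum, hsum, Matrix.mul_one]
  have k1 : trace (S * (ρ * matLog ρ) * S) = trace (ψ * matLog ρ) := by
    rw [← hpin _ hLρ]
    congr 1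
    rw [Matrix.mul_assoc, Matrix.mul_assoc, hScomm _ hLρ]
    simp only [Matrix.mul_assoc]
  have k2 := hpin _ hLφ
  have k3 : trace (S * ρ * S) = 1 := by
    rw [← Matrix.mul_one (S * ρ * S), hpin 1 (by simp), Matrix.mul_one, hψ1]
  have k4 : (trace (S * S * φ)).re = 1 := by
    rw [hSS, Finset.sum_mul, trace_sum, Complex.re_sum, ← hpsum]
    refine Finset.sum_congr rfl fun i _ => ?_
    rw [smul_mul_assoc, trace_smul, Complex.smul_re, ← hφP, hφl, hc]
    have := (hppos i).ne'
    have := (hl i).ne'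
    simp only [smul_eq_mul]
    field_simp
  obtain ⟨g1, g2⟩ := qj_klein ρ φ S hρPD hφPD hSH
  rw [k1, k2, k3, k4, Complex.one_re] at g1 g2
  have hD : umegakiD0 φ ψ - umegakiD0 ρ ψ =
      (trace (ψ * matLog ρ)).re - (trace (ψ * matLog φ)).re := by
    simp only [umegakiD0, Matrix.mul_sub, trace_sub, Complex.sub_re]
    ring
  refine ⟨by linarith, fun h => ?_, fun h => by rw [h]⟩
  have h2 := g2 (by linarith)
  rw [hScomm ρ hρc] at h2
  have hSinv' := mul_eq_one_comm.1 hSinv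
  have h3 := congrArg (fun X => (∑ i, (s i)⁻¹ • P i) * X) h2
  simp only [← Matrix.mul_assoc, hSinv', Matrix.one_mul] at h3
  exact h3.symm
end

section
/- (Strong Lüders rule from regularised entropic projection.) Let ψ ∈ M_d(ℂ) be a positive definite density matrix and let P be a nonzero projection, so t := Re tr(ψ·P) > 0. For positive semidefinite φ with φ = P·φ·P, tr(φ) = 1, and φ + (1−P) positive definite, define the regularised distance D₀ᴾ(φ,ψ) := Re(tr(P·ψ·P·(log(P·ψ·P + (1−P)) − log(φ + (1−P))))). Then φ* := (P·ψ·P)/t satisfies all these constraints and is the unique minimiser of D₀ᴾ(·,ψ) among all φ satisfying them: D₀ᴾ(φ*,ψ) ≤ D₀ᴾ(φ,ψ), with equality if and only if φ = φ*. -/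
open Matrix
open scoped ComplexOrder

/-- The regularised distance
`D₀ᴾ(φ,ψ) := Re tr(P ψ P · (log(P ψ P + (1−P)) − log(φ + (1−P))))`. -/
noncomputable def regD0P {d : ℕ} (P φ ψ : Matrix (Fin d) (Fin d) ℂ) : ℝ :=
  (Matrix.trace (P * ψ * P *
    (matLog (P * ψ * P + (1 - P)) - matLog (φ + (1 - P))))).re

lemma slr_spec {d : ℕ} {X : Matrix (Fin d) (Fin d) ℂ} (hX : X.PosDef) :
    ∃ (U : Matrix (Fin d) (Fin d) ℂ) (x : Fin d → ℝ), U * Uᴴ = 1 ∧ Uᴴ * U = 1 ∧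
      (∀ i, 0 < x i) ∧ X = U * diagonal (fun i => (x i : ℂ)) * Uᴴ ∧
      matLog X = U * diagonal (fun i => ((Real.log (x i) : ℝ) : ℂ)) * Uᴴ := by
  refine ⟨hX.1.eigenvectorUnitary, hX.1.eigenvalues, ?_, ?_, hX.eigenvalues_pos, ?_, ?_⟩
  · exact Unitary.coe_mul_star_self hX.1.eigenvectorUnitary
  · exact Unitary.coe_star_mul_self hX.1.eigenvectorUnitary
  · conv_lhs => rw [hX.1.spectral_theorem, Unitary.conjStarAlgAut_apply]
    rfl
  · rw [matLog, hX.1.cfc_eq, Matrix.IsHermitian.cfc, Unitary.conjStarAlgAut_apply]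
    rfl

lemma slr_log_mul {d : ℕ} {X Q : Matrix (Fin d) (Fin d) ℂ} (hX : X.PosDef) (h : X * Q = Q) :
    matLog X * Q = 0 := by
  obtain ⟨U, x, hU1, hU2, hx, hXe, hL⟩ := slr_spec hX
  have h1 : diagonal (fun i => (x i : ℂ)) * (Uᴴ * Q) = Uᴴ * Q := by
    calc _ = (Uᴴ * U) * diagonal (fun i => (x i : ℂ)) * (Uᴴ * Q) := by rw [hU2, one_mul]
      _ = Uᴴ * ((U * diagonal (fun i => (x i : ℂ)) * Uᴴ) * Q) := by simp only [mul_assoc]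
      _ = _ := by rw [← hXe, h]
  have h2 : diagonal (fun i => ((Real.log (x i) : ℝ) : ℂ)) * (Uᴴ * Q) = 0 := by
    ext i j
    have := congrFun (congrFun h1 i) j
    rw [diagonal_mul] at this ⊢
    by_cases h0 : (Uᴴ * Q) i j = 0
    · rw [h0]; simp
    · have h3 : (x i : ℂ) = 1 := by
        apply mul_right_cancel₀ h0
        rw [this, one_mul]
      have h4 : x i = 1 := by exact_mod_cast h3
      rw [h4]; simp
  rw [hL, mul_assoc, mul_assoc, h2, mul_zero]

lemma slr_trace {d : ℕ} (U V : Matrix (Fin d) (Fin d) ℂ) (x y : Fin d → ℝ) :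
    (trace ((U * diagonal (fun i => (x i : ℂ)) * Uᴴ) *
      (V * diagonal (fun i => (y i : ℂ)) * Vᴴ))).re =
      ∑ i, ∑ j, Complex.normSq ((Uᴴ * V) i j) * (x i * y j) := by
  have h : trace ((U * diagonal (fun i => (x i : ℂ)) * Uᴴ) *
      (V * diagonal (fun i => (y i : ℂ)) * Vᴴ)) =
      trace ((diagonal (fun i => (x i : ℂ)) * (Uᴴ * V)) *
        (diagonal (fun i => (y i : ℂ)) * (Uᴴ * V)ᴴ)) := by
    rw [conjTranspose_mul, conjTranspose_conjTranspose]
    simp only [mul_assoc]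
    rw [trace_mul_comm]
    simp only [mul_assoc]
  rw [h]
  generalize Uᴴ * V = W
  rw [trace, Complex.re_sum]
  refine Finset.sum_congr rfl fun i _ => ?_
  rw [diag_apply, mul_apply, Complex.re_sum]
  refine Finset.sum_congr rfl fun j _ => ?_
  rw [diagonal_mul, diagonal_mul, conjTranspose_apply]
  have : (x i : ℂ) * W i j * ((y j : ℂ) * star (W i j)) =
      ((Complex.normSq (W i j) * (x i * y j) : ℝ) : ℂ) := by
    push_cast
    rw [Complex.normSq_eq_conj_mul_self]
    simp only [Complex.star_def]
    ring
  rw [this, Complex.ofReal_re]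

lemma slr_scalar {x y : ℝ} (hx : 0 < x) (hy : 0 < y) :
    0 ≤ x * Real.log x - x * Real.log y - x + y ∧
      (x * Real.log x - x * Real.log y - x + y = 0 → x = y) := by
  have h1 : x * (y / x) = y := by field_simp
  have h2 : Real.log (y / x) = Real.log y - Real.log x := Real.log_div hy.ne' hx.ne'
  have hp : 0 < y / x := div_pos hy hx
  constructor
  · have := mul_le_mul_of_nonneg_left (Real.log_le_sub_one_of_pos hp) hx.le
    rw [h2] at this
    nlinarith
  · intro h
    by_contra hne
    have h3 : y / x ≠ 1 := by
      intro h4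
      rw [div_eq_one_iff_eq hx.ne'] at h4
      exact hne h4.symm
    have := mul_lt_mul_of_pos_left (Real.log_lt_sub_one_of_pos hp h3) hx
    rw [h2] at this
    nlinarith

/-- Klein inequality with equality case. -/
lemma slr_klein {d : ℕ} {X Y : Matrix (Fin d) (Fin d) ℂ} (hX : X.PosDef) (hY : Y.PosDef)
    (ht : X.trace = Y.trace) :
    0 ≤ (trace (X * (matLog X - matLog Y))).re ∧
      ((trace (X * (matLog X - matLog Y))).re = 0 → X = Y) := by
  obtain ⟨U, x, hU1, hU2, hx, hXe, hXL⟩ := slr_spec hX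
  obtain ⟨V, y, hV1, hV2, hy, hYe, hYL⟩ := slr_spec hY
  have hone : ∀ W : Matrix (Fin d) (Fin d) ℂ, W * Wᴴ = 1 →
      W * diagonal (fun _ => ((1 : ℝ) : ℂ)) * Wᴴ = 1 := by
    intro W hW
    simp [hW]
  have e1 := slr_trace U V (fun i => x i * Real.log (x i)) (fun _ => 1)
  have e2 := slr_trace U V x (fun j => Real.log (y j))
  have e3 := slr_trace U V x (fun _ => 1)
  have e4 := slr_trace U V (fun _ => 1) y
  rw [hone V hV1, mul_one] at e1 e3
  rw [hone U hU1, one_mul, ← hYe] at e4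
  rw [← hXe] at e3
  rw [← hXe, ← hYL] at e2
  have hXX : U * diagonal (fun i => ((x i * Real.log (x i) : ℝ) : ℂ)) * Uᴴ = X * matLog X := by
    rw [hXL]
    conv_rhs => rw [hXe]
    calc _ = U * (diagonal (fun i => (x i : ℂ)) *
          diagonal (fun i => ((Real.log (x i) : ℝ) : ℂ))) * Uᴴ := by
            rw [diagonal_mul_diagonal]; simp only [Complex.ofReal_mul]
      _ = U * diagonal (fun i => (x i : ℂ)) * (Uᴴ * U) *
          diagonal (fun i => ((Real.log (x i) : ℝ) : ℂ)) * Uᴴ := by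
            rw [hU2]; simp only [mul_assoc, mul_one, one_mul]
      _ = _ := by simp only [mul_assoc]
  rw [hXX] at e1
  have key : (trace (X * (matLog X - matLog Y))).re =
      ∑ i, ∑ j, Complex.normSq ((Uᴴ * V) i j) *
        (x i * Real.log (x i) - x i * Real.log (y j) - x i + y j) := by
    have hz : X.trace.re = Y.trace.re := by rw [ht]
    rw [mul_sub, trace_sub, Complex.sub_re]
    have : (trace (X * matLog X)).re - (trace (X * matLog Y)).re =
      (trace (X * matLog X)).re - (trace (X * matLog Y)).re - X.trace.re + Y.trace.re := by
      rw [hz]; ring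
    rw [this, e1, e2, e3, e4]
    simp only [← Finset.sum_sub_distrib, ← Finset.sum_add_distrib]
    refine Finset.sum_congr rfl fun i _ => Finset.sum_congr rfl fun j _ => ?_
    ring
  have hnn : ∀ i j, 0 ≤ Complex.normSq ((Uᴴ * V) i j) *
        (x i * Real.log (x i) - x i * Real.log (y j) - x i + y j) := fun i j =>
    mul_nonneg (Complex.normSq_nonneg _) (slr_scalar (hx i) (hy j)).1
  rw [key]
  refine ⟨Finset.sum_nonneg fun i _ => Finset.sum_nonneg fun j _ => hnn i j, fun h => ?_⟩
  have hW : diagonal (fun i => (x i : ℂ)) * (Uᴴ * V) =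
      (Uᴴ * V) * diagonal (fun i => (y i : ℂ)) := by
    ext i j
    rw [diagonal_mul, mul_diagonal]
    have h1 := (Finset.sum_eq_zero_iff_of_nonneg
      (fun i _ => Finset.sum_nonneg fun j _ => hnn i j)).1 h i (Finset.mem_univ _)
    have h2 := (Finset.sum_eq_zero_iff_of_nonneg (fun j _ => hnn i j)).1 h1 j (Finset.mem_univ _)
    rcases mul_eq_zero.1 h2 with h3 | h3
    · rw [Complex.normSq_eq_zero.1 h3]; simp
    · rw [(slr_scalar (hx i) (hy j)).2 h3, mul_comm]
  calc X = U * (diagonal (fun i => (x i : ℂ)) * (Uᴴ * V)) * Vᴴ := by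
        rw [hXe]
        calc _ = U * diagonal (fun i => (x i : ℂ)) * Uᴴ * (V * Vᴴ) := by rw [hV1, mul_one]
          _ = _ := by simp only [mul_assoc]
    _ = (U * Uᴴ) * (V * diagonal (fun i => (y i : ℂ)) * Vᴴ) := by
        rw [hW]; simp only [mul_assoc]
    _ = Y := by rw [hU1, one_mul, ← hYe]

lemma slr_quad {d : ℕ} (A P : Matrix (Fin d) (Fin d) ℂ) (hPH : Pᴴ = P) (v : Fin d → ℂ) :
    star v ⬝ᵥ ((P * A * P) *ᵥ v) = star (P *ᵥ v) ⬝ᵥ (A *ᵥ (P *ᵥ v)) := by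
  rw [star_mulVec, hPH, ← dotProduct_mulVec, mulVec_mulVec, mulVec_mulVec, mul_assoc]

/-- Strong Lüders rule from regularised entropic projection: for a positive
definite density matrix `ψ` and a nonzero projection `P`, `t := Re tr(ψ P) > 0`, and
`φ* := (1/t) • (P ψ P)` satisfies the constraints `φ* positive semidefinite`, `φ* = P φ* P`,
`tr φ* = 1`, `φ* + (1−P)` positive definite, and is the unique minimiser of `D₀ᴾ(·,ψ)` among all
`φ` satisfying these constraints. -/
theorem strong_lueders_regularised_entropic_projection {d : ℕ} (hd : 1 ≤ d)
    (ψ P : Matrix (Fin d) (Fin d) ℂ)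
    (hψ : ψ.PosDef) (hψ1 : ψ.trace = 1)
    (hPH : Pᴴ = P) (hP2 : P * P = P) (hPne : P ≠ 0)
    (C : Set (Matrix (Fin d) (Fin d) ℂ))
    (hC : C = {φ | φ.PosSemidef ∧ φ = P * φ * P ∧ φ.trace = 1 ∧ (φ + (1 - P)).PosDef}) :
    0 < (Matrix.trace (ψ * P)).re ∧
      (((Matrix.trace (ψ * P)).re)⁻¹ • (P * ψ * P)) ∈ C ∧
        ∀ φ ∈ C,
          regD0P P (((Matrix.trace (ψ * P)).re)⁻¹ • (P * ψ * P)) ψ ≤ regD0P P φ ψ ∧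
            (regD0P P φ ψ = regD0P P (((Matrix.trace (ψ * P)).re)⁻¹ • (P * ψ * P)) ψ ↔
              φ = ((Matrix.trace (ψ * P)).re)⁻¹ • (P * ψ * P)) := by
  subst hC
  have hQ2 : (1 - P) * (1 - P) = 1 - P := by
    rw [mul_sub, sub_mul, sub_mul, hP2]; simp
  have hQH : (1 - P)ᴴ = 1 - P := by simp [hPH]
  have hPQ : P * (1 - P) = 0 := by rw [mul_sub, hP2]; simp
  have hA : (P * ψ * P).PosSemidef := by
    have := hψ.posSemidef.mul_mul_conjTranspose_same P
    rwa [hPH] at this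
  have htr : trace (P * ψ * P) = trace (ψ * P) := by
    rw [mul_assoc, trace_mul_comm, mul_assoc, hP2]
  have hnn : 0 ≤ trace (ψ * P) := htr ▸ hA.trace_nonneg
  have hne : trace (ψ * P) ≠ 0 := by
    intro h0
    rw [← htr, hA.trace_eq_zero_iff] at h0
    apply hPne
    have hz : ∀ v, P *ᵥ v = 0 := by
      intro v
      by_contra hv
      have h1 := hψ.dotProduct_mulVec_pos hv
      rw [← slr_quad ψ P hPH v, h0] at h1
      simp at h1
    ext i j
    have := congrFun (hz (Pi.single j 1)) i
    simpa using this
  have hpos : 0 < trace (ψ * P) := lt_of_le_of_ne hnn (Ne.symm hne)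
  have ht : 0 < (trace (ψ * P)).re := (Complex.lt_def.1 hpos).1
  have hti : trace (ψ * P) = (((trace (ψ * P)).re : ℝ) : ℂ) := by
    apply Complex.ext
    · simp
    · simpa using ((Complex.lt_def.1 hpos).2).symm
  generalize (trace (ψ * P)).re = t at ht hti
  have hmem : (t⁻¹ • (P * ψ * P)).PosSemidef ∧ t⁻¹ • (P * ψ * P) = P * (t⁻¹ • (P * ψ * P)) * P ∧
      (t⁻¹ • (P * ψ * P)).trace = 1 ∧ (t⁻¹ • (P * ψ * P) + (1 - P)).PosDef := by
    have hS : (t⁻¹ • (P * ψ * P)).PosSemidef := hA.smul (inv_pos.2 ht).le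
    refine ⟨hS, ?_, ?_, ?_⟩
    · rw [mul_smul_comm, smul_mul_assoc]
      congr 1
      calc P * ψ * P = (P * P) * ψ * (P * P) := by rw [hP2]
        _ = _ := by simp only [mul_assoc]
    · rw [trace_smul, htr, hti, Complex.real_smul, ← Complex.ofReal_mul, inv_mul_cancel₀ ht.ne']
      simp
    · have hQS : (1 - P).PosSemidef := by
        have := posSemidef_conjTranspose_mul_self (1 - P)
        rwa [hQH, hQ2] at this
      refine PosDef.of_dotProduct_mulVec_pos (hS.add hQS).1 fun {v} hv => ?_
      rw [add_mulVec, dotProduct_add]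
      by_cases hPv : P *ᵥ v = 0
      · have h1 : (1 - P) *ᵥ v = v := by rw [sub_mulVec, hPv]; simp
        rw [h1]
        exact add_pos_of_nonneg_of_pos (hS.dotProduct_mulVec_nonneg v)
          (dotProduct_star_self_pos_iff.2 hv)
      · refine add_pos_of_pos_of_nonneg ?_ (hQS.dotProduct_mulVec_nonneg v)
        rw [smul_mulVec, dotProduct_smul, slr_quad ψ P hPH v]
        exact smul_pos (inv_pos.2 ht) (hψ.dotProduct_mulVec_pos hPv)
  refine ⟨ht, hmem, fun φ hφ => ?_⟩
  obtain ⟨hφ1, hφ2, hφ3, hφ4⟩ := hφ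
  obtain ⟨hs1, hs2, hs3, hs4⟩ := hmem
  have hQ : ∀ χ : Matrix (Fin d) (Fin d) ℂ, χ = P * χ * P → (χ + (1 - P)) * (1 - P) = 1 - P := by
    intro χ hχ
    rw [add_mul, hQ2, hχ, mul_assoc, hPQ, mul_zero, zero_add]
  have hl1 := slr_log_mul hφ4 (hQ _ hφ2)
  have hl2 := slr_log_mul hs4 (hQ _ hs2)
  obtain ⟨k1, k2⟩ := slr_klein hs4 hφ4 (by rw [trace_add, trace_add, hs3, hφ3])
  have hk : regD0P P φ ψ - regD0P P (t⁻¹ • (P * ψ * P)) ψ =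
      t * (trace ((t⁻¹ • (P * ψ * P) + (1 - P)) *
        (matLog (t⁻¹ • (P * ψ * P) + (1 - P)) - matLog (φ + (1 - P))))).re := by
    have hz : trace ((1 - P) *
        (matLog (t⁻¹ • (P * ψ * P) + (1 - P)) - matLog (φ + (1 - P)))) = 0 := by
      rw [trace_mul_comm, sub_mul, hl1, hl2]; simp
    rw [add_mul, trace_add, hz, add_zero, smul_mul_assoc, trace_smul, Complex.smul_re,
      smul_eq_mul, mul_inv_cancel_left₀ ht.ne']
    unfold regD0P
    rw [← Complex.sub_re, ← trace_sub, ← mul_sub, sub_sub_sub_cancel_left]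
  refine ⟨?_, fun h => ?_, fun h => by rw [h]⟩
  · have := mul_nonneg ht.le k1
    linarith
  · rw [h, sub_self] at hk
    have h0 := (mul_eq_zero.1 hk.symm).resolve_left ht.ne'
    exact (add_right_cancel (k2 h0)).symm
end

section
/- Let ψ ∈ M_d(ℂ) be positive definite, let P be a projection, and set ρ := P·ψ·P + (1−P)·ψ·(1−P), which is positive definite and hence invertible. Then Re(tr(ψ·ρ⁻¹·ψ)) ≤ 2·Re(tr(ψ)). -/
open Matrix
open scoped ComplexOrder

/-- For positive definite `ψ` and a projection `P`, with
`ρ := P ψ P + (1−P) ψ (1−P)` (positive definite, hence invertible), one has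
`Re tr(ψ ρ⁻¹ ψ) ≤ 2 Re tr(ψ)`. -/
theorem trace_inverse_bound {d : ℕ} (hd : 1 ≤ d)
    (ψ P : Matrix (Fin d) (Fin d) ℂ)
    (hψ : ψ.PosDef)
    (hPH : Pᴴ = P) (hP2 : P * P = P) :
    (Matrix.trace (ψ * (P * ψ * P + (1 - P) * ψ * (1 - P))⁻¹ * ψ)).re ≤
      2 * (Matrix.trace ψ).re := by
  set ρ := P * ψ * P + (1 - P) * ψ * (1 - P) with hρ
  obtain ⟨φ, hφ⟩ : ∃ φ, φ = (P + P - 1) * ψ * (P + P - 1)ᴴ := ⟨_, rfl⟩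
  have hφp : φ.PosSemidef := hφ ▸ hψ.posSemidef.mul_mul_conjTranspose_same _
  have hsum : ρ + ρ = ψ + φ := by
    rw [hφ, hρ]
    simp only [conjTranspose_sub, conjTranspose_add, hPH, conjTranspose_one]
    noncomm_ring
  have h2 : (ρ + ρ).PosDef := hsum ▸ hψ.add_posSemidef hφp
  have hu : IsUnit ρ := by
    have h := h2.isUnit
    rw [← two_mul] at h
    have hc : Commute (2 : Matrix (Fin d) (Fin d) ℂ) ρ := (Nat.cast_commute 2 ρ)
    exact (hc.isUnit_mul_iff.mp h).2
  have hdet : IsUnit ρ.det := (Matrix.isUnit_iff_isUnit_det ρ).mp hu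
  have hρH : ρᴴ = ρ := by
    rw [hρ]
    simp only [conjTranspose_sub, conjTranspose_add, conjTranspose_mul, hPH, conjTranspose_one,
      hψ.isHermitian.eq, Matrix.mul_assoc]
  obtain ⟨R, hR⟩ : ∃ R, R = ρ⁻¹ := ⟨_, rfl⟩
  have hRH : Rᴴ = R := by rw [hR, conjTranspose_nonsing_inv, hρH]
  have h1 : ρ * R = 1 := hR ▸ Matrix.mul_nonsing_inv ρ hdet
  have h1' : R * ρ = 1 := hR ▸ Matrix.nonsing_inv_mul ρ hdet
  rw [← hR]
  have hφe : φ = ρ + ρ - ψ := by rw [hsum]; abel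
  have hA : ((ψ * R) * φ * (ψ * R)ᴴ).PosSemidef := hφp.mul_mul_conjTranspose_same _
  have hB : ((φ * R) * ψ * (φ * R)ᴴ).PosSemidef := hψ.posSemidef.mul_mul_conjTranspose_same _
  have hC := (hA.add hB).trace_nonneg
  have e1 : ψ * R * φ = ψ + ψ - ψ * R * ψ := by
    rw [hφe, mul_sub, mul_add, Matrix.mul_assoc ψ R ρ, h1', mul_one]
  have e2 : φ * R * ψ = ψ + ψ - ψ * R * ψ := by
    rw [hφe, sub_mul, add_mul, h1, sub_mul, add_mul, one_mul]
  have key : (ψ * R) * φ * (ψ * R)ᴴ + (φ * R) * ψ * (φ * R)ᴴ =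
      (ψ + ψ - ψ * R * ψ) + (ψ + ψ - ψ * R * ψ) := by
    rw [conjTranspose_mul, conjTranspose_mul, hRH, hψ.isHermitian.eq, hφp.isHermitian.eq, e2,
      ← e1]
    have : ψ * R * φ * (R * ψ) = ψ * R * (φ * R * ψ) := by noncomm_ring
    rw [this, e2, ← e1]
    calc ψ * R * (ψ * R * φ) + ψ * R * φ * (R * φ) 
        = ψ * R * (ψ + φ) * (R * φ) := by noncomm_ring
      _ = ψ * (R * ρ) * (R * φ) + ψ * (R * ρ) * (R * φ) := by rw [← hsum]; noncomm_ring
      _ = _ := by rw [h1']; noncomm_ring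
  rw [key] at hC
  have := (Complex.le_def.mp hC).1
  simp only [trace_add, trace_sub, Complex.add_re, Complex.sub_re, Complex.zero_re] at this
  linarith
end
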